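/- Let A be an n×N integer matrix whose columns a(1),…,a(N) span ℚ^n over ℚ, let a(N+1) ∈ ℤ^n, let Ã = (A | a(N+1)), let M be a left R_A-module, and equip M[[t]] with the left R_Ã-action in which z_j, ∂_j (1 ≤ j ≤ N), c_i, τ_i^{±1} act coefficientwise, z_{N+1} acts as multiplication by t, and ∂_{N+1} acts as formal differentiation d/dt. Then the boundary value map bv : Hom_{R_Ã}(GG(Ã), M[[t]]) → Hom_{R_A}(GG(A), M), which sends F to the unique R_A-linear map GG(A) → M taking [1] to the constant (t^0) coefficient of F([1]), is a well-defined bijection, and its inverse is the map 𝔇 which sends f ∈ Hom_{R_A}(GG(A), M) to the unique R_Ã-linear map GG(Ã) → M[[t]] taking [1] to Σ_{m=0}^∞ f([τ^{m·a(N+1)}]) · t^m/m!. -/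

import Mathlib

/-- Generators of the difference-differential ring `R_A`: `z j`, `∂ j`, `c i`,
`τ i` and `τ i ⁻¹`. -/
inductive GGGen (n N : ℕ) : Type
  | z (j : Fin N)
  | d (j : Fin N)
  | c (i : Fin n)
  | t (i : Fin n)
  | tinv (i : Fin n)

/-- The pairs of generators that do NOT commute by decree (their products are governed
by the explicit relations instead). -/
def GGGen.NonCommPair {n N : ℕ} : GGGen n N → GGGen n N → Prop
  | .t i, .c i' => i = i'
  | .c i, .t i' => i = i'
  | .tinv i, .c i' => i = i'
  | .c i, .tinv i' => i = i'
  | .d j, .z j' => j = j'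
  | .z j, .d j' => j = j'
  | .t i, .tinv i' => i = i'
  | .tinv i, .t i' => i = i'
  | _, _ => False

/-- The defining relations of `R_A` on the free algebra:
`τᵢcᵢ = (cᵢ+1)τᵢ`, `τᵢ⁻¹cᵢ = (cᵢ−1)τᵢ⁻¹`, `∂ⱼzⱼ = zⱼ∂ⱼ + 1`, `τᵢτᵢ⁻¹ = τᵢ⁻¹τᵢ = 1`,
and all other pairs of generators commute. -/
inductive GGRel (n N : ℕ) :
    FreeAlgebra ℂ (GGGen n N) → FreeAlgebra ℂ (GGGen n N) → Prop
  | tc (i : Fin n) : GGRel n N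
      (FreeAlgebra.ι ℂ (GGGen.t i) * FreeAlgebra.ι ℂ (GGGen.c i))
      ((FreeAlgebra.ι ℂ (GGGen.c i) + 1) * FreeAlgebra.ι ℂ (GGGen.t i))
  | tinvc (i : Fin n) : GGRel n N
      (FreeAlgebra.ι ℂ (GGGen.tinv i) * FreeAlgebra.ι ℂ (GGGen.c i))
      ((FreeAlgebra.ι ℂ (GGGen.c i) - 1) * FreeAlgebra.ι ℂ (GGGen.tinv i))
  | dz (j : Fin N) : GGRel n N
      (FreeAlgebra.ι ℂ (GGGen.d j) * FreeAlgebra.ι ℂ (GGGen.z j))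
      (FreeAlgebra.ι ℂ (GGGen.z j) * FreeAlgebra.ι ℂ (GGGen.d j) + 1)
  | ttinv (i : Fin n) : GGRel n N
      (FreeAlgebra.ι ℂ (GGGen.t i) * FreeAlgebra.ι ℂ (GGGen.tinv i)) 1
  | tinvt (i : Fin n) : GGRel n N
      (FreeAlgebra.ι ℂ (GGGen.tinv i) * FreeAlgebra.ι ℂ (GGGen.t i)) 1
  | comm (g h : GGGen n N) (hc : ¬ GGGen.NonCommPair g h) : GGRel n N
      (FreeAlgebra.ι ℂ g * FreeAlgebra.ι ℂ h)
      (FreeAlgebra.ι ℂ h * FreeAlgebra.ι ℂ g)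

/-- The ring `R_A` of difference-differential operators (it depends only on `n`, `N`). -/
abbrev GGRing (n N : ℕ) : Type := RingQuot (GGRel n N)

/-- The image of a generator in `R_A`. -/
noncomputable def GGRing.gen {n N : ℕ} (g : GGGen n N) : GGRing n N :=
  RingQuot.mkAlgHom ℂ (GGRel n N) (FreeAlgebra.ι ℂ g)

/-- `τᵢ^k` for `k ∈ ℤ`, using `τᵢ⁻¹` for negative exponents. -/
noncomputable def GGRing.tpow {n N : ℕ} (i : Fin n) (k : ℤ) : GGRing n N :=
  if 0 ≤ k then GGRing.gen (GGGen.t i) ^ k.toNat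
  else GGRing.gen (GGGen.tinv i) ^ (-k).toNat

/-- `τ^v = ∏ᵢ τᵢ^{vᵢ}` for `v ∈ ℤⁿ`. -/
noncomputable def GGRing.tauPow {n N : ℕ} (v : Fin n → ℤ) : GGRing n N :=
  (List.ofFn fun i => GGRing.tpow (N := N) i (v i)).prod

/-- The Euler operator `E_i = Σ_j a_{ij} z_j ∂_j + c_i` in `R_A`. -/
noncomputable def GGRing.euler {n N : ℕ} (A : Matrix (Fin n) (Fin N) ℤ) (i : Fin n) :
    GGRing n N :=
  (∑ j : Fin N, (A i j : GGRing n N) * GGRing.gen (GGGen.z j) * GGRing.gen (GGGen.d j))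
    + GGRing.gen (GGGen.c i)

/-- The left ideal `I_A ⊆ R_A` generated by the `E_i` and the `∂_j − τ^{a(j)}`. -/
noncomputable def GGIdeal {n N : ℕ} (A : Matrix (Fin n) (Fin N) ℤ) :
    Submodule (GGRing n N) (GGRing n N) :=
  Submodule.span (GGRing n N)
    (Set.range (GGRing.euler A) ∪
      Set.range (fun j : Fin N =>
        GGRing.gen (GGGen.d j) - GGRing.tauPow (fun i => A i j)))

/-- The GG system `GG(A) = R_A/I_A` as a left `R_A`-module. -/
abbrev GGModule {n N : ℕ} (A : Matrix (Fin n) (Fin N) ℤ) : Type :=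
  GGRing n N ⧸ GGIdeal A

theorem SemiconjBy.mul_left_add_intCast {R : Type*} [Ring R] {a b x : R} {e f : ℤ}
    (ha : SemiconjBy a x (x + (e : R))) (hb : SemiconjBy b x (x + (f : R))) :
    SemiconjBy (a * b) x (x + ((e + f : ℤ) : R)) := by
  have h := (ha.add_right ((Int.cast_commute f a).symm)).mul_left hb
  rwa [add_assoc, ← Int.cast_add] at h

theorem SemiconjBy.pow_left_add_intCast {R : Type*} [Ring R] {a x : R} {e : ℤ}
    (ha : SemiconjBy a x (x + (e : R))) (m : ℕ) :
    SemiconjBy (a ^ m) x (x + ((m * e : ℤ) : R)) := by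
  induction m with
  | zero => simp
  | succ m ih =>
    rw [pow_succ', show ((m + 1 : ℕ) * e : ℤ) = e + m * e by push_cast; ring]
    exact ha.mul_left_add_intCast ih

namespace GGRing

variable {n N : ℕ}

theorem gen_t_semiconj_c (i : Fin n) :
    SemiconjBy (gen (N := N) (.t i)) (gen (.c i)) (gen (.c i) + 1) := by
  simpa [gen, SemiconjBy] using RingQuot.mkAlgHom_rel ℂ (GGRel.tc (N := N) i)

theorem gen_tinv_semiconj_c (i : Fin n) :
    SemiconjBy (gen (N := N) (.tinv i)) (gen (.c i)) (gen (.c i) - 1) := by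
  simpa [gen, SemiconjBy] using RingQuot.mkAlgHom_rel ℂ (GGRel.tinvc (N := N) i)

theorem gen_t_mul_tinv (i : Fin n) : gen (N := N) (.t i) * gen (.tinv i) = 1 := by
  simpa [gen] using RingQuot.mkAlgHom_rel ℂ (GGRel.ttinv (N := N) i)

theorem gen_tinv_mul_t (i : Fin n) : gen (N := N) (.tinv i) * gen (.t i) = 1 := by
  simpa [gen] using RingQuot.mkAlgHom_rel ℂ (GGRel.tinvt (N := N) i)

theorem gen_commute {g h : GGGen n N} (hc : ¬ g.NonCommPair h) :
    Commute (gen g) (gen h) := by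
  simpa [gen, Commute, SemiconjBy] using RingQuot.mkAlgHom_rel ℂ (GGRel.comm g h hc)

/-- `τᵢ` as a unit of `R_A`. -/
noncomputable def tauUnit (N : ℕ) (i : Fin n) : (GGRing n N)ˣ where
  val := gen (.t i)
  inv := gen (.tinv i)
  val_inv := gen_t_mul_tinv i
  inv_val := gen_tinv_mul_t i

theorem tpow_eq_zpow (i : Fin n) (k : ℤ) :
    tpow (N := N) i k = ((tauUnit N i ^ k : (GGRing n N)ˣ) : GGRing n N) := by
  rcases le_or_gt 0 k with hk | hk
  · lift k to ℕ using hk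
    simp [tpow, tauUnit]
  · obtain ⟨m, rfl⟩ : ∃ m : ℕ, k = -(m : ℤ) := ⟨(-k).toNat, by omega⟩
    rw [tpow, if_neg (by omega), zpow_neg, zpow_natCast, ← inv_pow, Units.val_pow_eq_pow_val]
    simp [tauUnit]

theorem tpow_zero (i : Fin n) : tpow (N := N) i 0 = 1 := by
  simp [tpow_eq_zpow]

theorem tpow_add (i : Fin n) (k l : ℤ) :
    tpow (N := N) i (k + l) = tpow i k * tpow i l := by
  simp [tpow_eq_zpow, zpow_add]

/-- An element commuting with `τᵢ` and `τᵢ⁻¹` commutes with every `τᵢ^k`. -/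
theorem commute_tpow {x : GGRing n N} {i : Fin n} (ht : Commute x (gen (.t i)))
    (htinv : Commute x (gen (.tinv i))) (k : ℤ) : Commute x (tpow i k) := by
  unfold tpow
  split_ifs
  · exact ht.pow_right _
  · exact htinv.pow_right _

theorem tpow_commute_tpow (i i' : Fin n) (k l : ℤ) :
    Commute (tpow (N := N) i k) (tpow i' l) := by
  rcases eq_or_ne i i' with rfl | h
  · rw [Commute, SemiconjBy, ← tpow_add, ← tpow_add, add_comm]
  · refine commute_tpow ?_ ?_ l <;> refine (commute_tpow ?_ ?_ k).symm <;> apply gen_commute <;>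
      simp [GGGen.NonCommPair, h.symm]

theorem tauPow_eq_map (v : Fin n → ℤ) :
    tauPow (N := N) v = ((List.finRange n).map fun i => tpow (N := N) i (v i)).prod := by
  rw [tauPow, List.ofFn_eq_map]

theorem tauPow_zero : tauPow (N := N) (0 : Fin n → ℤ) = 1 := by
  simp [tauPow_eq_map, tpow_zero]

theorem tauPow_add (v w : Fin n → ℤ) :
    tauPow (N := N) (v + w) = tauPow v * tauPow w := by
  simp only [tauPow_eq_map, Pi.add_apply, tpow_add]
  induction List.finRange n with
  | nil => simp
  | cons i l ih =>
    have hc : Commute (tpow (N := N) i (w i)) (l.map fun i => tpow (N := N) i (v i)).prod := by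
      refine Commute.list_prod_right _ _ fun x hx => ?_
      obtain ⟨j, -, rfl⟩ := List.mem_map.mp hx
      exact tpow_commute_tpow ..
    simp only [List.map_cons, List.prod_cons, ih]
    rw [mul_assoc, mul_assoc, ← mul_assoc _ _ (l.map fun i => tpow (N := N) i (w i)).prod,
      hc.eq, mul_assoc]

theorem commute_tauPow {x : GGRing n N} (ht : ∀ i, Commute x (gen (.t i)))
    (htinv : ∀ i, Commute x (gen (.tinv i))) (v : Fin n → ℤ) : Commute x (tauPow v) := by
  rw [tauPow_eq_map]
  refine Commute.list_prod_right _ _ fun y hy => ?_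
  obtain ⟨j, -, rfl⟩ := List.mem_map.mp hy
  exact commute_tpow (ht j) (htinv j) _

theorem commute_z_tauPow (j : Fin N) (v : Fin n → ℤ) :
    Commute (gen (.z j)) (tauPow v) :=
  commute_tauPow (fun _ => gen_commute (by simp [GGGen.NonCommPair]))
    (fun _ => gen_commute (by simp [GGGen.NonCommPair])) v

theorem commute_d_tauPow (j : Fin N) (v : Fin n → ℤ) :
    Commute (gen (.d j)) (tauPow v) :=
  commute_tauPow (fun _ => gen_commute (by simp [GGGen.NonCommPair]))
    (fun _ => gen_commute (by simp [GGGen.NonCommPair])) v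

theorem tpow_semiconj_c (i i' : Fin n) (k : ℤ) :
    SemiconjBy (tpow (N := N) i' k) (gen (.c i))
      (gen (.c i) + ((if i' = i then k else 0 : ℤ) : GGRing n N)) := by
  split_ifs with h
  · subst h
    unfold tpow
    split_ifs with hk
    · have h := SemiconjBy.pow_left_add_intCast (e := 1)
        (by simpa using gen_t_semiconj_c (N := N) i') k.toNat
      rwa [mul_one, Int.toNat_of_nonneg hk] at h
    · have h := SemiconjBy.pow_left_add_intCast (e := -1)
        (by simpa [sub_eq_add_neg] using gen_tinv_semiconj_c (N := N) i') (-k).toNat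
      rwa [Int.toNat_of_nonneg (by omega), neg_mul_neg, mul_one] at h
  · rw [Int.cast_zero, add_zero]
    refine (commute_tpow ?_ ?_ k).symm <;> apply gen_commute <;>
      simp [GGGen.NonCommPair, Ne.symm h]

theorem tauPow_semiconj_c (i : Fin n) (v : Fin n → ℤ) :
    SemiconjBy (tauPow (N := N) v) (gen (.c i)) (gen (.c i) + (v i : GGRing n N)) := by
  have key : ∀ l : List (Fin n),
      SemiconjBy (l.map fun i' => tpow (N := N) i' (v i')).prod (gen (.c i))
        (gen (.c i) +
          (((l.map fun i' => if i' = i then v i' else 0).sum : ℤ) : GGRing n N)) := by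
    intro l
    induction l with
    | nil => simp
    | cons i' l ih =>
      simp only [List.map_cons, List.prod_cons, List.sum_cons]
      exact (tpow_semiconj_c i i' (v i')).mul_left_add_intCast ih
  rw [tauPow_eq_map]
  convert key (List.finRange n) using 3
  rw [← List.ofFn_eq_map, List.sum_ofFn]
  simp

theorem tauPow_semiconj_euler (A : Matrix (Fin n) (Fin N) ℤ) (i : Fin n) (v : Fin n → ℤ) :
    SemiconjBy (tauPow v) (euler A i) (euler A i + (v i : GGRing n N)) := by
  rw [euler, add_assoc]
  refine SemiconjBy.add_right ?_ (tauPow_semiconj_c i v)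
  refine (Commute.sum_left _ _ _ fun j _ => ?_).symm
  exact ((Int.cast_commute _ _).mul_left (commute_z_tauPow j v)).mul_left (commute_d_tauPow j v)

/-- On an `R_A`-module the scalar `1/k` undoes multiplication by the natural number `k`. -/
theorem inv_smul_nsmul {M : Type*} [AddCommGroup M] [Module (GGRing n N) M] {k : ℕ} (hk : k ≠ 0)
    (x : M) : algebraMap ℂ (GGRing n N) ((k : ℂ)⁻¹) • (k • x) = x := by
  rw [← Nat.cast_smul_eq_nsmul (GGRing n N) k x, smul_smul, ← map_natCast (algebraMap ℂ (GGRing n N)),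
    ← map_mul, inv_mul_cancel₀ (by exact_mod_cast hk), map_one, one_smul]

end GGRing

/-- The solutions of the system `GG(A)` in an `R_A`-module: the elements killed by `I_A`. -/
def GGSolution {n N : ℕ} (A : Matrix (Fin n) (Fin N) ℤ) {M : Type*} [AddCommGroup M]
    [Module (GGRing n N) M] (x : M) : Prop :=
  (∀ i, GGRing.euler A i • x = 0) ∧
    ∀ j, GGRing.gen (n := n) (GGGen.d j) • x = GGRing.tauPow (N := N) (fun i => A i j) • x

section Solutions

variable {n N : ℕ} {A : Matrix (Fin n) (Fin N) ℤ} {M : Type*} [AddCommGroup M]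
  [Module (GGRing n N) M]

theorem GGModule.hom_mk (f : GGModule A →ₗ[GGRing n N] M) (r : GGRing n N) :
    f (Submodule.Quotient.mk r) = r • f (Submodule.Quotient.mk 1) := by
  rw [← map_smul, ← Submodule.Quotient.mk_smul, smul_eq_mul, mul_one]

theorem GGModule.hom_ext {f g : GGModule A →ₗ[GGRing n N] M}
    (h : f (Submodule.Quotient.mk 1) = g (Submodule.Quotient.mk 1)) : f = g := by
  refine LinearMap.ext fun x => ?_
  induction x using Submodule.Quotient.induction_on with
  | _ r => rw [hom_mk, h, ← hom_mk]

theorem GGSolution.of_hom (f : GGModule A →ₗ[GGRing n N] M) :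
    GGSolution A (f (Submodule.Quotient.mk 1)) := by
  have hzero : ∀ r ∈ GGIdeal A, r • f (Submodule.Quotient.mk 1) = 0 := fun r hr => by
    rw [← GGModule.hom_mk, (Submodule.Quotient.mk_eq_zero _).mpr hr, map_zero]
  refine ⟨fun i => hzero _ (Submodule.subset_span (Or.inl ⟨i, rfl⟩)), fun j => ?_⟩
  rw [← sub_eq_zero, ← sub_smul]
  exact hzero _ (Submodule.subset_span (Or.inr ⟨j, rfl⟩))

theorem GGSolution.exists_hom {x : M} (hx : GGSolution A x) :
    ∃ f : GGModule A →ₗ[GGRing n N] M, f (Submodule.Quotient.mk 1) = x := by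
  have hle : GGIdeal A ≤ LinearMap.ker (LinearMap.toSpanSingleton (GGRing n N) M x) := by
    refine Submodule.span_le.mpr ?_
    rintro _ (⟨i, rfl⟩ | ⟨j, rfl⟩)
    · simpa using hx.1 i
    · simpa [sub_smul, sub_eq_zero] using hx.2 j
  refine ⟨(GGIdeal A).liftQ _ hle, ?_⟩
  rw [← Submodule.mkQ_apply, ← LinearMap.comp_apply, Submodule.liftQ_mkQ]
  simp

end Solutions

section PowerSeries

variable {n N : ℕ} {M : Type*} [AddCommGroup M] [Module (GGRing n N) M]
  [Module (GGRing n (N + 1)) (ℕ → M)]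

theorem GGRing.tauPow_smul_apply
    (ht : ∀ (i : Fin n) (F : ℕ → M) (k : ℕ),
      (GGRing.gen (n := n) (N := N + 1) (GGGen.t i) • F) k
        = GGRing.gen (n := n) (N := N) (GGGen.t i) • F k)
    (htinv : ∀ (i : Fin n) (F : ℕ → M) (k : ℕ),
      (GGRing.gen (n := n) (N := N + 1) (GGGen.tinv i) • F) k
        = GGRing.gen (n := n) (N := N) (GGGen.tinv i) • F k)
    (v : Fin n → ℤ) (F : ℕ → M) (k : ℕ) :
    (tauPow (N := N + 1) v • F) k = tauPow (N := N) v • F k := by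
  have hpow : ∀ g g', (∀ (F : ℕ → M) k,
      (gen (n := n) (N := N + 1) g • F) k = gen (n := n) (N := N) g' • F k) →
      ∀ (m : ℕ) (F : ℕ → M), (gen (n := n) (N := N + 1) g ^ m • F) k
        = gen (n := n) (N := N) g' ^ m • F k := by
    intro g g' hg m
    induction m with
    | zero => simp
    | succ m ih => intro F; rw [pow_succ, mul_smul, ih, hg, pow_succ, mul_smul]
  have htpow : ∀ (i : Fin n) (e : ℤ) (F : ℕ → M),
      (tpow (N := N + 1) i e • F) k = tpow (N := N) i e • F k := by
    intro i e F
    unfold tpow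
    split_ifs
    · exact hpow _ _ (ht i) _ _
    · exact hpow _ _ (htinv i) _ _
  simp only [tauPow_eq_map]
  induction List.finRange n with
  | nil => simp
  | cons i l ih => simp only [List.map_cons, List.prod_cons, mul_smul, htpow, ih]

/-- The system `GG(Ã)` on `M[[t]]`, written coefficientwise. -/
theorem GGSolution.powerSeries_iff {A : Matrix (Fin n) (Fin N) ℤ} {w : Fin n → ℤ}
    {Atil : Matrix (Fin n) (Fin (N + 1)) ℤ}
    (hAtil : ∀ (i : Fin n) (j : Fin (N + 1)),
      Atil i j = if h : (j : ℕ) < N then A i ⟨j, h⟩ else w i)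
    (hz : ∀ (j : Fin N) (F : ℕ → M) (k : ℕ),
      (GGRing.gen (n := n) (N := N + 1) (GGGen.z (Fin.castSucc j)) • F) k
        = GGRing.gen (n := n) (N := N) (GGGen.z j) • F k)
    (hd : ∀ (j : Fin N) (F : ℕ → M) (k : ℕ),
      (GGRing.gen (n := n) (N := N + 1) (GGGen.d (Fin.castSucc j)) • F) k
        = GGRing.gen (n := n) (N := N) (GGGen.d j) • F k)
    (hcc : ∀ (i : Fin n) (F : ℕ → M) (k : ℕ),
      (GGRing.gen (n := n) (N := N + 1) (GGGen.c i) • F) k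
        = GGRing.gen (n := n) (N := N) (GGGen.c i) • F k)
    (ht : ∀ (i : Fin n) (F : ℕ → M) (k : ℕ),
      (GGRing.gen (n := n) (N := N + 1) (GGGen.t i) • F) k
        = GGRing.gen (n := n) (N := N) (GGGen.t i) • F k)
    (htinv : ∀ (i : Fin n) (F : ℕ → M) (k : ℕ),
      (GGRing.gen (n := n) (N := N + 1) (GGGen.tinv i) • F) k
        = GGRing.gen (n := n) (N := N) (GGGen.tinv i) • F k)
    (hzlast : ∀ F : ℕ → M,
      (GGRing.gen (n := n) (N := N + 1) (GGGen.z (Fin.last N)) • F) 0 = 0 ∧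
      ∀ k : ℕ, (GGRing.gen (n := n) (N := N + 1) (GGGen.z (Fin.last N)) • F) (k + 1) = F k)
    (hdlast : ∀ (F : ℕ → M) (k : ℕ),
      (GGRing.gen (n := n) (N := N + 1) (GGGen.d (Fin.last N)) • F) k = (k + 1) • F (k + 1))
    (F : ℕ → M) :
    GGSolution Atil F ↔ ∀ k : ℕ,
      (∀ i, (GGRing.euler A i + ((k * w i : ℤ) : GGRing n N)) • F k = 0) ∧
      (∀ j, GGRing.gen (n := n) (GGGen.d j) • F k = GGRing.tauPow (N := N) (fun i => A i j) • F k) ∧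
      (k + 1) • F (k + 1) = GGRing.tauPow (N := N) w • F k := by
  have hcast : ∀ j, (fun i => Atil i (Fin.castSucc j)) = fun i => A i j := by
    intro j; ext i; simp [hAtil]
  have hlast : (fun i => Atil i (Fin.last N)) = w := by
    ext i; simp [hAtil]
  have htheta : ∀ k, (GGRing.gen (n := n) (N := N + 1) (GGGen.z (Fin.last N)) •
      GGRing.gen (n := n) (N := N + 1) (GGGen.d (Fin.last N)) • F) k = k • F k := by
    rintro (_ | k)
    · rw [(hzlast _).1, zero_smul]
    · rw [(hzlast _).2, hdlast]
  have heuler : ∀ i k, (GGRing.euler Atil i • F) k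
      = (GGRing.euler A i + ((k * w i : ℤ) : GGRing n N)) • F k := by
    intro i k
    simp only [GGRing.euler, Fin.sum_univ_castSucc, add_smul, Finset.sum_smul, mul_smul,
      Pi.add_apply, Finset.sum_apply, Int.cast_smul_eq_zsmul, Pi.smul_apply, hz, hd, hcc,
      htheta, congrFun hlast i, congrFun (hcast _) i]
    rw [natCast_zsmul, smul_comm, add_right_comm]
  simp only [GGSolution, funext_iff, heuler, Fin.forall_fin_succ', hd, hdlast,
    GGRing.tauPow_smul_apply ht htinv, hcast, hlast, Pi.zero_apply]
  exact ⟨fun h k => ⟨fun i => h.1 i k, fun j => h.2.1 j k, h.2.2 k⟩,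
    fun h => ⟨fun i k => (h k).1 i, fun j k => (h k).2.1 j, fun k => (h k).2.2⟩⟩

end PowerSeries

/-- The recursion `(m + 1) φₘ₊₁ = τ^w φₘ` determines `φ` from `φ₀`. -/
theorem GGRing.eq_inv_factorial_smul_iff {n N : ℕ} {M : Type*} [AddCommGroup M]
    [Module (GGRing n N) M] (w : Fin n → ℤ) (F : ℕ → M) (x : M) :
    (∀ m : ℕ, F m = algebraMap ℂ (GGRing n N) ((m.factorial : ℂ)⁻¹) •
      GGRing.tauPow (N := N) (fun i => (m : ℤ) * w i) • x) ↔
    F 0 = x ∧ ∀ k, (k + 1) • F (k + 1) = GGRing.tauPow (N := N) w • F k := by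
  have hzero : GGRing.tauPow (N := N) (fun i => ((0 : ℕ) : ℤ) * w i) = 1 := by
    simp only [Nat.cast_zero, zero_mul]
    exact GGRing.tauPow_zero
  have hsucc : ∀ k : ℕ, GGRing.tauPow (N := N) (fun i => ((k + 1 : ℕ) : ℤ) * w i)
      = GGRing.tauPow w * GGRing.tauPow (fun i => (k : ℤ) * w i) := by
    intro k
    rw [← GGRing.tauPow_add]
    congr 1
    ext i
    simp only [Pi.add_apply]
    push_cast
    ring
  constructor
  · intro h
    refine ⟨by rw [h, hzero]; simp, fun k => ?_⟩
    rw [h, h, hsucc, ← Nat.cast_smul_eq_nsmul (GGRing n N), smul_smul,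
      ← map_natCast (algebraMap ℂ (GGRing n N)), ← map_mul, mul_smul (GGRing.tauPow w) _ x,
      smul_smul (GGRing.tauPow w) (algebraMap _ _ _), ← Algebra.commutes, mul_smul]
    congr 2
    rw [Nat.factorial_succ]
    have := Nat.factorial_ne_zero k
    push_cast
    have : (k : ℂ) + 1 ≠ 0 := by exact_mod_cast k.succ_ne_zero
    field_simp
  · rintro ⟨h0, hrec⟩ m
    induction m with
    | zero => rw [h0, hzero]; simp
    | succ k ih =>
      rw [← GGRing.inv_smul_nsmul (n := n) (N := N) k.succ_ne_zero (F (k + 1)), Nat.succ_eq_add_one,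
        hrec, ih, hsucc, mul_smul, smul_smul (GGRing.tauPow w) (algebraMap _ _ _), ← Algebra.commutes, mul_smul,
        smul_smul, ← map_mul]
      congr 2
      rw [Nat.factorial_succ]
      push_cast
      rw [mul_inv]

/-- If `x` solves `GG(A)`, then `τ^v x` solves the same equations with `E_i` shifted by `v_i`. -/
theorem GGSolution.tauPow_smul {n N : ℕ} {A : Matrix (Fin n) (Fin N) ℤ} {M : Type*}
    [AddCommGroup M] [Module (GGRing n N) M] {x : M} (hx : GGSolution A x) (v : Fin n → ℤ) :
    (∀ i, (GGRing.euler A i + (v i : GGRing n N)) • GGRing.tauPow (N := N) v • x = 0) ∧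
    ∀ j, GGRing.gen (n := n) (GGGen.d j) • GGRing.tauPow (N := N) v • x
      = GGRing.tauPow (N := N) (fun i => A i j) • GGRing.tauPow (N := N) v • x := by
  refine ⟨fun i => ?_, fun j => ?_⟩
  · rw [smul_smul, ← (GGRing.tauPow_semiconj_euler A i v).eq, mul_smul, hx.1, smul_zero]
  · rw [smul_smul, (GGRing.commute_d_tauPow j v).eq, mul_smul, hx.2, smul_smul, smul_smul,
      ← GGRing.tauPow_add, ← GGRing.tauPow_add, add_comm]

/-- with `Ã = (A | a(N+1))` and `M[[t]] = ℕ → M` equipped with the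
`R_Ã`-module structure in which the `R_A`-generators act coefficientwise, `z_{N+1}` acts
as multiplication by `t` and `∂_{N+1}` as `d/dt`, the boundary value map
`bv : Hom_{R_Ã}(GG(Ã), M[[t]]) → Hom_{R_A}(GG(A), M)`, `bv(F)([1]) = F([1])(0)`, is
a well-defined bijection whose inverse sends `f` to the unique `R_Ã`-linear map with
`F([1]) = Σ_m f([τ^{m·a(N+1)}]) t^m/m!`. -/
theorem gg_boundary_value_bijective {n N : ℕ} (A : Matrix (Fin n) (Fin N) ℤ)
    (hspan : ∀ v : Fin n → ℚ, ∃ u : Fin N → ℚ,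
      ∀ i : Fin n, v i = ∑ j : Fin N, (A i j : ℚ) * u j)
    (w : Fin n → ℤ)
    (Atil : Matrix (Fin n) (Fin (N + 1)) ℤ)
    (hAtil : ∀ (i : Fin n) (j : Fin (N + 1)),
      Atil i j = if h : (j : ℕ) < N then A i ⟨j, h⟩ else w i)
    (M : Type*) [AddCommGroup M] [Module (GGRing n N) M]
    [Module (GGRing n (N + 1)) (ℕ → M)]
    (hz : ∀ (j : Fin N) (F : ℕ → M) (k : ℕ),
      (GGRing.gen (n := n) (N := N + 1) (GGGen.z (Fin.castSucc j)) • F) k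
        = GGRing.gen (n := n) (N := N) (GGGen.z j) • F k)
    (hd : ∀ (j : Fin N) (F : ℕ → M) (k : ℕ),
      (GGRing.gen (n := n) (N := N + 1) (GGGen.d (Fin.castSucc j)) • F) k
        = GGRing.gen (n := n) (N := N) (GGGen.d j) • F k)
    (hcc : ∀ (i : Fin n) (F : ℕ → M) (k : ℕ),
      (GGRing.gen (n := n) (N := N + 1) (GGGen.c i) • F) k
        = GGRing.gen (n := n) (N := N) (GGGen.c i) • F k)
    (ht : ∀ (i : Fin n) (F : ℕ → M) (k : ℕ),
      (GGRing.gen (n := n) (N := N + 1) (GGGen.t i) • F) k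
        = GGRing.gen (n := n) (N := N) (GGGen.t i) • F k)
    (htinv : ∀ (i : Fin n) (F : ℕ → M) (k : ℕ),
      (GGRing.gen (n := n) (N := N + 1) (GGGen.tinv i) • F) k
        = GGRing.gen (n := n) (N := N) (GGGen.tinv i) • F k)
    (hzlast : ∀ F : ℕ → M,
      (GGRing.gen (n := n) (N := N + 1) (GGGen.z (Fin.last N)) • F) 0 = 0 ∧
      ∀ k : ℕ, (GGRing.gen (n := n) (N := N + 1) (GGGen.z (Fin.last N)) • F) (k + 1) = F k)
    (hdlast : ∀ (F : ℕ → M) (k : ℕ),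
      (GGRing.gen (n := n) (N := N + 1) (GGGen.d (Fin.last N)) • F) k = (k + 1) • F (k + 1)) :
    ∃ bv : (GGModule Atil →ₗ[GGRing n (N + 1)] (ℕ → M)) →
        (GGModule A →ₗ[GGRing n N] M),
      (∀ F : GGModule Atil →ₗ[GGRing n (N + 1)] (ℕ → M),
        bv F (Submodule.Quotient.mk 1) = F (Submodule.Quotient.mk 1) 0) ∧
      Function.Bijective bv ∧
      (∀ (F : GGModule Atil →ₗ[GGRing n (N + 1)] (ℕ → M))
         (f : GGModule A →ₗ[GGRing n N] M),
        bv F = f ↔ ∀ m : ℕ,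
          F (Submodule.Quotient.mk 1) m
            = (algebraMap ℂ (GGRing n N) ((m.factorial : ℂ)⁻¹)) •
                f (Submodule.Quotient.mk (GGRing.tauPow (fun i' => (m : ℤ) * w i')))) := by
  have hsol := GGSolution.powerSeries_iff hAtil hz hd hcc ht htinv hzlast hdlast
  have hbv : ∀ F : GGModule Atil →ₗ[GGRing n (N + 1)] (ℕ → M),
      ∃ f : GGModule A →ₗ[GGRing n N] M,
        f (Submodule.Quotient.mk 1) = F (Submodule.Quotient.mk 1) 0 := by
    intro F
    obtain ⟨hE, hD, -⟩ := (hsol _).mp (GGSolution.of_hom F) 0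
    exact GGSolution.exists_hom ⟨fun i => by simpa using hE i, hD⟩
  choose bv hbv using hbv
  have hinv : ∀ (F : GGModule Atil →ₗ[GGRing n (N + 1)] (ℕ → M))
      (f : GGModule A →ₗ[GGRing n N] M),
      bv F = f ↔ ∀ m : ℕ, F (Submodule.Quotient.mk 1) m
        = (algebraMap ℂ (GGRing n N) ((m.factorial : ℂ)⁻¹)) •
            f (Submodule.Quotient.mk (GGRing.tauPow (fun i' => (m : ℤ) * w i'))) := by
    intro F f
    simp only [GGModule.hom_mk f (GGRing.tauPow _)]
    rw [GGRing.eq_inv_factorial_smul_iff, ← hbv]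
    exact ⟨fun h => ⟨by rw [h], fun k => ((hsol _).mp (GGSolution.of_hom F) k).2.2⟩,
      fun h => GGModule.hom_ext h.1⟩
  refine ⟨bv, hbv, ⟨fun F G hFG => ?_, fun f => ?_⟩, hinv⟩
  · refine GGModule.hom_ext (funext fun m => ?_)
    rw [(hinv F _).mp hFG m, (hinv G _).mp rfl m]
  · let φ : ℕ → M := fun m => algebraMap ℂ (GGRing n N) ((m.factorial : ℂ)⁻¹) •
      GGRing.tauPow (N := N) (fun i => (m : ℤ) * w i) • f (Submodule.Quotient.mk 1)
    obtain ⟨-, hrec⟩ := (GGRing.eq_inv_factorial_smul_iff w φ _).mp fun m => rfl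
    have hφ : GGSolution Atil φ := by
      refine (hsol φ).mpr fun k => ?_
      obtain ⟨hE, hD⟩ := (GGSolution.of_hom f).tauPow_smul (fun i => (k : ℤ) * w i)
      refine ⟨fun i => ?_, fun j => ?_, hrec k⟩
      · simp only [φ]
        rw [smul_smul, ← Algebra.commutes, mul_smul, hE, smul_zero]
      · simp only [φ]
        rw [smul_smul, ← Algebra.commutes, mul_smul, hD, smul_smul, Algebra.commutes, mul_smul]
    obtain ⟨F, hF⟩ := hφ.exists_hom
    refine ⟨F, (hinv F f).mpr fun m => ?_⟩
    rw [hF, GGModule.hom_mk f (GGRing.tauPow _)]
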